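/- Consider the double pendulum on a wheel: mass matrix on ℝ³ with entries g_{ij}(x) = m_{ij} cos(x^i − x^j) for i,j ∈ {1,2,3}, where the parameters m_{ij} = m_{ji} are positive and g(x) is invertible for every x ∈ ℝ³; the unactuated degrees of freedom are a = 1,2 (so m = 2). Then every smooth solution λ : ℝ³ → ℝ^{2×3} of the λ-equations ∂(g_{ai}λ_b^i)/∂x^k − [ka,i]λ_b^i − [kb,i]λ_a^i = 0 (all k = 1,2,3 and a,b = 1,2) is basic: there exists a constant κ ∈ ℝ such that λ_a^i(x) = κ δ_a^i for all x ∈ ℝ³, all a = 1,2, and all i = 1,2,3. Equivalently, the functions ν_{ab} := g_{ai}λ_b^i satisfy ν₁₁ ≡ κ m₁₁, ν₂₂ ≡ (m₂₂/m₁₁) ν₁₁, and ν₁₂ = (m₁₂/m₁₁) cos(x² − x¹) ν₁₁. -/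

import Mathlib

/-- Partial derivative in the `k`-th coordinate direction. -/
noncomputable def pd {n : ℕ} (k : Fin n) (f : (Fin n → ℝ) → ℝ) (x : Fin n → ℝ) : ℝ :=
  fderiv ℝ f x (Pi.single k 1)

/-- Christoffel symbol of the first kind `[ij,k]` of the matrix-valued map `g`. -/
noncomputable def chr {n : ℕ} (g : (Fin n → ℝ) → Matrix (Fin n) (Fin n) ℝ)
    (i j k : Fin n) (x : Fin n → ℝ) : ℝ :=
  (1/2) * (pd i (fun y => g y j k) x + pd j (fun y => g y i k) x - pd k (fun y => g y i j) x)

/-- Mass matrix of the double pendulum on a wheel: `g_{ij} = m_{ij} cos(xⁱ − xʲ)`. -/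
noncomputable def gDP (m : Matrix (Fin 3) (Fin 3) ℝ) (x : Fin 3 → ℝ) :
    Matrix (Fin 3) (Fin 3) ℝ :=
  Matrix.of fun i j => m i j * Real.cos (x i - x j)

/-- `ν_{ab} = g_{ai} λ_b^i` for the double pendulum on a wheel. -/
noncomputable def nuDP (m : Matrix (Fin 3) (Fin 3) ℝ)
    (lam : (Fin 3 → ℝ) → Fin 2 → Fin 3 → ℝ) (a b : Fin 2) (x : Fin 3 → ℝ) : ℝ :=
  ∑ i, gDP m x (Fin.castSucc a) i * lam x b i

/-!
Put `S_{ab} = m_{ai} sin(xⁱ − x^a) λ_b^i`. The only nonzero Christoffel symbols are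
`[jj,k] = m_{jk} sin(x^k − x^j)`, so the λ-equations say
`∂_k ν_{ab} = δ_k^a S_{ab} + δ_k^b S_{ba}`. Hence `ν_{ab}`, and with it `S_{ab}`, depends on
`x^a` and `x^b` only. In complex terms `ν_{ab} + i S_{ab} = e^{-i x^a} m_{aj} e^{i x^j} λ_b^j`, so
`m_{aj} e^{i x^j} λ_b^j` does not depend on `x³`. Projecting it orthogonally to `e^{i x^c}` for
`c = 1, 2` kills `λ_b^c`; eliminating the other unactuated component and moving `x³` to `x^c`
gives `sin(x³ − x^c) λ_b³ = 0` up to a factor that is nonzero for `c = 1` or `c = 2`, because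
`m₁₁ m₂₂ ≠ m₁₂ m₂₁`; so `λ_b³ = 0` by continuity. Now `S_{aa} = m_{ab} sin(x^b − x^a) λ_a^b` for
`b ≠ a`, which depends on `x^a` only and vanishes at `x^b = x^a`, so `λ_a^b = 0` and
`ν_{aa} = m_{aa} λ_a^a` is constant. The equation for `∂_b ν_{ab}` makes the two constants equal.
-/

section PartialDerivatives

variable {n : ℕ} {f : (Fin n → ℝ) → ℝ} {s : Set (Fin n)}

theorem fderiv_apply_eq_sum_pd (f : (Fin n → ℝ) → ℝ) (x v : Fin n → ℝ) :
    fderiv ℝ f x v = ∑ k, v k * pd k f x := by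
  conv_lhs => rw [pi_eq_sum_univ' v, map_sum]
  simp only [map_smul, smul_eq_mul, pd]

theorem dependsOn_of_pd_eq_zero (hf : Differentiable ℝ f) (h : ∀ k ∉ s, ∀ x, pd k f x = 0) :
    DependsOn f s := by
  intro x y hxy
  have fderiv_eq_zero (z : Fin n → ℝ) : fderiv ℝ f z (y - x) = 0 := by
    rw [fderiv_apply_eq_sum_pd]
    refine Finset.sum_eq_zero fun k _ => ?_
    by_cases hk : k ∈ s
    · simp [hxy k hk]
    · simp [h k hk]
  have deriv_zero (t : ℝ) : HasDerivAt (fun t => f (AffineMap.lineMap x y t)) 0 t := by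
    rw [← fderiv_eq_zero (AffineMap.lineMap x y t)]
    exact (hf _).hasFDerivAt.comp_hasDerivAt t AffineMap.hasDerivAt_lineMap
  simpa using is_const_of_deriv_eq_zero (fun t => (deriv_zero t).differentiableAt)
    (fun t => (deriv_zero t).deriv) 0 1

theorem dependsOn_pd (hf : DependsOn f s) (k : Fin n) : DependsOn (pd k f) s := by
  intro x y hxy
  have shift : (fun z => f (z + (y - x))) = f := by
    funext z
    exact hf fun i hi => by simp [hxy i hi]
  calc pd k f x = pd k (fun z => f (z + (y - x))) x := by rw [shift]
    _ = pd k f y := by rw [pd, fderiv_comp_add_right, add_sub_cancel, pd]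

theorem pd_const_mul_cos_sub (c : ℝ) (i j k : Fin n) (x : Fin n → ℝ) :
    pd k (fun y => c * Real.cos (y i - y j)) x =
      c * Real.sin (x i - x j) * ((if j = k then 1 else 0) - (if i = k then 1 else 0)) := by
  have hasFDerivAt_sub : HasFDerivAt (fun y : Fin n → ℝ => y i - y j)
      (ContinuousLinearMap.proj (R := ℝ) (φ := fun _ : Fin n => ℝ) i
        - ContinuousLinearMap.proj (R := ℝ) (φ := fun _ : Fin n => ℝ) j) x :=
    (hasFDerivAt_apply i x).sub (hasFDerivAt_apply j x)
  rw [pd, (hasFDerivAt_sub.cos.const_mul c).fderiv]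
  simp only [smul_apply, sub_apply, ContinuousLinearMap.proj_apply, Pi.single_apply, smul_eq_mul]
  ring

end PartialDerivatives

section Density

variable {ι : Type*} {i j : ι}

theorem dense_sin_ne_zero : Dense {t : ℝ | Real.sin t ≠ 0} := by
  have countable : {t : ℝ | Real.sin t = 0}.Countable := by
    simpa only [Real.sin_eq_zero_iff, Set.range] using
      Set.countable_range fun n : ℤ => (n : ℝ) * Real.pi
  exact countable.dense_compl ℝ

theorem dense_sin_sub_ne_zero (hij : i ≠ j) : Dense {x : ι → ℝ | Real.sin (x i - x j) ≠ 0} := by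
  classical
  let diff : (ι → ℝ) →ₗ[ℝ] ℝ :=
    LinearMap.proj (R := ℝ) (φ := fun _ : ι => ℝ) i - LinearMap.proj j
  have surjective : Function.Surjective diff := fun t => ⟨Pi.single i t, by simp [diff, hij.symm]⟩
  exact dense_sin_ne_zero.preimage (LinearMap.isOpenMap_of_finiteDimensional diff surjective)

theorem eq_zero_of_sin_sub_mul_eq_zero {f : (ι → ℝ) → ℝ} (hf : Continuous f) (hij : i ≠ j)
    (h : ∀ x, Real.sin (x i - x j) * f x = 0) (x : ι → ℝ) : f x = 0 :=
  congrFun (hf.ext_on (dense_sin_sub_ne_zero hij) continuous_const fun y hy =>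
    (mul_eq_zero.1 (h y)).resolve_left hy) x

end Density

theorem sum_univ_eq_castSucc_add {M : Type*} [AddCommMonoid M] {a b : Fin 2} (hab : a ≠ b)
    (f : Fin 3 → M) : ∑ i, f i = f a.castSucc + f b.castSucc + f 2 := by
  fin_cases a <;> fin_cases b <;> simp [Fin.sum_univ_three, add_comm] at hab ⊢

theorem castSucc_ne_two (a : Fin 2) : a.castSucc ≠ (2 : Fin 3) :=
  (Fin.castSucc_lt_last a).ne

theorem chr_gDP {m : Matrix (Fin 3) (Fin 3) ℝ} (hm : m.IsSymm) (i j k : Fin 3)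
    (x : Fin 3 → ℝ) :
    chr (gDP m) i j k x = if i = j then m j k * Real.sin (x k - x j) else 0 := by
  have sin_swap (a b : Fin 3) : Real.sin (x a - x b) = -Real.sin (x b - x a) := by
    rw [← Real.sin_neg, neg_sub]
  simp only [chr, gDP, Matrix.of_apply, pd_const_mul_cos_sub]
  rcases eq_or_ne i j with rfl | hij
  · rcases eq_or_ne k i with rfl | hki
    · simp
    · simp only [hki, hki.symm, ↓reduceIte, sub_self, Real.sin_zero, sin_swap k i]
      ring
  · rcases eq_or_ne k i with rfl | hki
    · simp [hij, hij.symm, sin_swap k j, hm.apply j k]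
    · rcases eq_or_ne k j with rfl | hkj
      · simp [hij, hij.symm]
      · simp [hij, hij.symm, hki, hki.symm, hkj, hkj.symm]

/-- At `(0, 0, π/2)` the third degree of freedom decouples from the other two. -/
theorem det_gDP_zero_zero_pi_div_two (m : Matrix (Fin 3) (Fin 3) ℝ) :
    (gDP m ![0, 0, Real.pi / 2]).det = m 2 2 * (m 0 0 * m 1 1 - m 0 1 * m 1 0) := by
  simp only [Matrix.det_fin_three, gDP, Matrix.of_apply, Matrix.cons_val, sub_self, zero_sub,
    Real.cos_neg, Real.cos_zero, Real.cos_pi_div_two]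
  ring

/-- The λ-equations of the metric `g` on `ℝ³` with unactuated directions `0` and `1`. -/
def SolvesLambdaEquations (g : (Fin 3 → ℝ) → Matrix (Fin 3) (Fin 3) ℝ)
    (lam : (Fin 3 → ℝ) → Fin 2 → Fin 3 → ℝ) : Prop :=
  ∀ (x : Fin 3 → ℝ) (k : Fin 3) (a b : Fin 2),
    pd k (fun y => ∑ i, g y a.castSucc i * lam y b i) x
      - ∑ i, chr g k a.castSucc i x * lam x b i
      - ∑ i, chr g k b.castSucc i x * lam x a i = 0

/-- The sum `m_{ai} sin(xⁱ − θ) λ_b^i`, the imaginary part of `e^{-iθ} m_{aj} e^{i x^j} λ_b^j`.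
For `θ = x^a` it is the sine counterpart `S_{ab}` of `ν_{ab}`. -/
noncomputable def sinSum (m : Matrix (Fin 3) (Fin 3) ℝ) (lam : (Fin 3 → ℝ) → Fin 2 → Fin 3 → ℝ)
    (a b : Fin 2) (θ : ℝ) (x : Fin 3 → ℝ) : ℝ :=
  ∑ i, m a.castSucc i * Real.sin (x i - θ) * lam x b i

section DoublePendulum

variable {m : Matrix (Fin 3) (Fin 3) ℝ} {lam : (Fin 3 → ℝ) → Fin 2 → Fin 3 → ℝ}

theorem sinSum_eq_cos_mul_add_sin_mul (a b : Fin 2) (θ : ℝ) (x : Fin 3 → ℝ) :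
    sinSum m lam a b θ x = Real.cos (x a.castSucc - θ) * sinSum m lam a b (x a.castSucc) x
      + Real.sin (x a.castSucc - θ) * nuDP m lam a b x := by
  simp only [sinSum, nuDP, Finset.mul_sum, ← Finset.sum_add_distrib]
  refine Finset.sum_congr rfl fun i _ => ?_
  have sin_split : Real.sin (x i - θ) =
      Real.sin (x a.castSucc - θ) * Real.cos (x a.castSucc - x i)
        - Real.cos (x a.castSucc - θ) * Real.sin (x a.castSucc - x i) := by
    rw [← Real.sin_sub, sub_sub_sub_cancel_left]
  have sin_swap : Real.sin (x i - x a.castSucc) = -Real.sin (x a.castSucc - x i) := by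
    rw [← Real.sin_neg, neg_sub]
  rw [sin_split, sin_swap, gDP, Matrix.of_apply]
  ring

theorem differentiable_nuDP (hlam : ∀ a i, Differentiable ℝ fun x => lam x a i) (a b : Fin 2) :
    Differentiable ℝ (nuDP m lam a b) := by
  unfold nuDP
  simp only [gDP, Matrix.of_apply]
  have := hlam b
  fun_prop

theorem nuDP_of_eq_mul_delta {κ : ℝ} {x : Fin 3 → ℝ}
    (h : ∀ a i, lam x a i = κ * if Fin.castSucc a = i then 1 else 0) (a b : Fin 2) :
    nuDP m lam a b x = κ * gDP m x a.castSucc b.castSucc := by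
  simp [nuDP, h, mul_comm]

namespace SolvesLambdaEquations

theorem pd_nuDP (h : SolvesLambdaEquations (gDP m) lam) (hm : m.IsSymm) (k : Fin 3)
    (a b : Fin 2) (x : Fin 3 → ℝ) :
    pd k (nuDP m lam a b) x =
      (if k = a.castSucc then sinSum m lam a b (x a.castSucc) x else 0)
        + (if k = b.castSucc then sinSum m lam b a (x b.castSucc) x else 0) := by
  have sum_chr (c d : Fin 2) : ∑ i, chr (gDP m) k c.castSucc i x * lam x d i =
      if k = c.castSucc then sinSum m lam c d (x c.castSucc) x else 0 := by
    simp only [chr_gDP hm]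
    split_ifs <;> simp [sinSum]
  rw [← sum_chr, ← sum_chr]
  exact sub_eq_zero.1 ((sub_sub _ _ _).symm.trans (h x k a b))

theorem eq_of_lam_diag_eq (h : SolvesLambdaEquations (gDP m) lam) (hm : m.IsSymm)
    (h2 : ∀ b x, lam x b 2 = 0) {a b : Fin 2} (hab : a ≠ b) (hne : m a.castSucc b.castSucc ≠ 0)
    (hoff : ∀ c d : Fin 2, c ≠ d → ∀ x, lam x c d.castSucc = 0) {κ : Fin 2 → ℝ}
    (hdiag : ∀ c x, lam x c c.castSucc = κ c) : κ a = κ b := by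
  have hab' : a.castSucc ≠ b.castSucc := by simpa using hab
  have nuDP_off : nuDP m lam a b = fun x =>
      m a.castSucc b.castSucc * κ b * Real.cos (x a.castSucc - x b.castSucc) := by
    funext x
    simp only [nuDP, sum_univ_eq_castSucc_add hab, gDP, Matrix.of_apply, hoff b a hab.symm, hdiag,
      h2]
    ring
  have pd_eq := h.pd_nuDP hm b.castSucc a b (Pi.single a.castSucc (Real.pi / 2))
  rw [nuDP_off, pd_const_mul_cos_sub] at pd_eq
  refine (mul_left_cancel₀ hne ?_).symm
  simpa [sinSum, sum_univ_eq_castSucc_add hab, hab', hab'.symm, hoff a b hab, hdiag, h2,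
    hm.apply a.castSucc b.castSucc] using pd_eq

variable (h : SolvesLambdaEquations (gDP m) lam) (hm : m.IsSymm)
  (hlam : ∀ a i, Differentiable ℝ fun x => lam x a i)

include h hm hlam

theorem dependsOn_nuDP (a b : Fin 2) :
    DependsOn (nuDP m lam a b) {a.castSucc, b.castSucc} :=
  dependsOn_of_pd_eq_zero (differentiable_nuDP hlam a b) fun k hk x => by
    simp only [Set.mem_insert_iff, Set.mem_singleton_iff, not_or] at hk
    simp [h.pd_nuDP hm, hk]

theorem dependsOn_sinSum_self (a b : Fin 2) :
    DependsOn (fun x => sinSum m lam a b (x a.castSucc) x) {a.castSucc, b.castSucc} := by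
  intro x y hxy
  have pd_eq := dependsOn_pd (h.dependsOn_nuDP hm hlam a b) a.castSucc hxy
  rw [h.pd_nuDP hm, h.pd_nuDP hm] at pd_eq
  obtain rfl | hab := eq_or_ne a b
  · simpa [← two_mul] using pd_eq
  · simpa [hab] using pd_eq

theorem dependsOn_sinSum (a b : Fin 2) (θ : ℝ) :
    DependsOn (sinSum m lam a b θ) {a.castSucc, b.castSucc} := by
  intro x y hxy
  have self_eq : sinSum m lam a b (x a.castSucc) x = sinSum m lam a b (y a.castSucc) y :=
    h.dependsOn_sinSum_self hm hlam a b hxy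
  rw [sinSum_eq_cos_mul_add_sin_mul, sinSum_eq_cos_mul_add_sin_mul a b θ y, self_eq,
    h.dependsOn_nuDP hm hlam a b hxy, hxy a.castSucc (Set.mem_insert _ _)]

/-- Eliminates `λ_b^d` between the sums `sinSum · b (x^c)`, in which `λ_b^c` has coefficient `0`. -/
theorem minor_mul_sin_mul_lam_two_eq_zero {c d : Fin 2} (hcd : c ≠ d) (b : Fin 2)
    (x : Fin 3 → ℝ) :
    (m c.castSucc 2 * m d.castSucc d.castSucc - m d.castSucc 2 * m c.castSucc d.castSucc)
      * (Real.sin (x 2 - x c.castSucc) * lam x b 2) = 0 := by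
  have eliminated (a : Fin 2) :
      m a.castSucc d.castSucc * (Real.sin (x d.castSucc - x c.castSucc)
        * (lam x b d.castSucc - lam (Function.update x 2 (x c.castSucc)) b d.castSucc))
      + m a.castSucc 2 * (Real.sin (x 2 - x c.castSucc) * lam x b 2) = 0 := by
    have sum_eq : sinSum m lam a b (x c.castSucc) x =
        sinSum m lam a b (x c.castSucc) (Function.update x 2 (x c.castSucc)) :=
      h.dependsOn_sinSum hm hlam a b _ fun i hi => by
        obtain rfl | rfl := hi <;> simp [castSucc_ne_two]
    simp only [sinSum, sum_univ_eq_castSucc_add hcd, Function.update_of_ne (castSucc_ne_two _),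
      Function.update_self, sub_self, Real.sin_zero] at sum_eq
    linear_combination sum_eq
  linear_combination m d.castSucc d.castSucc * eliminated c
    - m c.castSucc d.castSucc * eliminated d

theorem lam_two_eq_zero (hdet : m 0 0 * m 1 1 - m 0 1 * m 1 0 ≠ 0) (h02 : m 0 2 ≠ 0)
    (b : Fin 2) (x : Fin 3 → ℝ) : lam x b 2 = 0 := by
  obtain ⟨c, d, hcd, minor⟩ : ∃ c d : Fin 2, c ≠ d ∧
      m c.castSucc 2 * m d.castSucc d.castSucc - m d.castSucc 2 * m c.castSucc d.castSucc ≠ 0 := by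
    by_contra! all_zero
    have minor₀ := all_zero 0 1 (by decide)
    have minor₁ := all_zero 1 0 (by decide)
    simp only [Fin.castSucc_zero, Fin.castSucc_one] at minor₀ minor₁
    refine mul_ne_zero h02 hdet ?_
    linear_combination m 0 0 * minor₀ + m 0 1 * minor₁
  exact eq_zero_of_sin_sub_mul_eq_zero (hlam b 2).continuous (castSucc_ne_two c).symm
    (fun y => (mul_eq_zero.1 (h.minor_mul_sin_mul_lam_two_eq_zero hm hlam hcd b y)).resolve_left
      minor) x

section VanishingThirdComponent

variable (h2 : ∀ b x, lam x b 2 = 0)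

include h2

theorem sinSum_diag_eq_zero (a : Fin 2) (x : Fin 3 → ℝ) :
    sinSum m lam a a (x a.castSucc) x = 0 := by
  obtain ⟨b, hab⟩ := exists_ne a
  have hab' : a.castSucc ≠ b.castSucc := by simpa using hab.symm
  rw [h.dependsOn_sinSum hm hlam a a _ (y := Function.update x b.castSucc (x a.castSucc))
    fun i hi => by obtain rfl | rfl := hi <;> simp [hab']]
  simp [sinSum, sum_univ_eq_castSucc_add hab.symm, hab', h2]

theorem lam_castSucc_eq_zero {a b : Fin 2} (hab : a ≠ b)
    (hne : m a.castSucc b.castSucc ≠ 0) (x : Fin 3 → ℝ) : lam x a b.castSucc = 0 := by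
  have hab' : b.castSucc ≠ a.castSucc := by simpa using hab.symm
  refine eq_zero_of_sin_sub_mul_eq_zero (hlam a _).continuous hab' (fun y => ?_) x
  have diag := h.sinSum_diag_eq_zero hm hlam h2 a y
  simpa [sinSum, sum_univ_eq_castSucc_add hab, h2, hne] using diag

theorem exists_lam_diag_eq {a b : Fin 2} (hab : a ≠ b) (hne : m a.castSucc a.castSucc ≠ 0)
    (hoff : ∀ x, lam x a b.castSucc = 0) : ∃ κ, ∀ x, lam x a a.castSucc = κ := by
  have nuDP_diag (x : Fin 3 → ℝ) :
      nuDP m lam a a x = m a.castSucc a.castSucc * lam x a a.castSucc := by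
    simp [nuDP, sum_univ_eq_castSucc_add hab, gDP, hoff, h2]
  have nuDP_const : DependsOn (nuDP m lam a a) ∅ :=
    dependsOn_of_pd_eq_zero (differentiable_nuDP hlam a a) fun k _ x => by
      simp [h.pd_nuDP hm, h.sinSum_diag_eq_zero hm hlam h2]
  refine ⟨lam 0 a a.castSucc, fun x => mul_left_cancel₀ hne ?_⟩
  rw [← nuDP_diag, ← nuDP_diag]
  exact nuDP_const (by simp)

end VanishingThirdComponent

theorem exists_lam_eq_mul_delta (hblock : ∀ a b : Fin 2, m a.castSucc b.castSucc ≠ 0)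
    (h02 : m 0 2 ≠ 0) (hdet : m 0 0 * m 1 1 - m 0 1 * m 1 0 ≠ 0) :
    ∃ κ : ℝ, ∀ x a i, lam x a i = κ * if Fin.castSucc a = i then 1 else 0 := by
  have third := h.lam_two_eq_zero hm hlam hdet h02
  have off_diag (a b : Fin 2) (hab : a ≠ b) : ∀ x, lam x a b.castSucc = 0 :=
    h.lam_castSucc_eq_zero hm hlam third hab (hblock a b)
  have diag (a : Fin 2) : ∃ κ, ∀ x, lam x a a.castSucc = κ := by
    obtain ⟨b, hba⟩ := exists_ne a
    exact h.exists_lam_diag_eq hm hlam third hba.symm (hblock a a) (off_diag a b hba.symm)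
  choose κ hκ using diag
  have κ_eq (a b : Fin 2) : κ a = κ b := by
    obtain rfl | hab := eq_or_ne a b
    · rfl
    · exact h.eq_of_lam_diag_eq hm third hab (hblock a b) off_diag hκ
  refine ⟨κ 0, fun x a i => ?_⟩
  obtain ⟨b, rfl⟩ | rfl := i.eq_castSucc_or_eq_last
  · obtain rfl | hab := eq_or_ne a b
    · simp [hκ, κ_eq a 0]
    · simp [off_diag a b hab, hab]
  · simpa [castSucc_ne_two] using third a x

end SolvesLambdaEquations

end DoublePendulum

theorem double_pendulum_only_basic_solutions_general
    (m : Matrix (Fin 3) (Fin 3) ℝ) (hmsym : m.IsSymm)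
    (hblock : ∀ a b : Fin 2, m a.castSucc b.castSucc ≠ 0) (h02 : m 0 2 ≠ 0)
    (hdet : m 0 0 * m 1 1 - m 0 1 * m 1 0 ≠ 0)
    (lam : (Fin 3 → ℝ) → Fin 2 → Fin 3 → ℝ)
    (hlam : ∀ a i, Differentiable ℝ (fun x => lam x a i))
    (hlamEq : SolvesLambdaEquations (gDP m) lam) :
    ∃ κ : ℝ,
      (∀ (x : Fin 3 → ℝ) (a : Fin 2) (i : Fin 3),
        lam x a i = κ * if (Fin.castSucc a : Fin 3) = i then 1 else 0) ∧
      (∀ x : Fin 3 → ℝ, nuDP m lam 0 0 x = κ * m 0 0) ∧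
      (∀ x : Fin 3 → ℝ, nuDP m lam 1 1 x = (m 1 1 / m 0 0) * nuDP m lam 0 0 x) ∧
      (∀ x : Fin 3 → ℝ, nuDP m lam 0 1 x =
        (m 0 1 / m 0 0) * Real.cos (x 1 - x 0) * nuDP m lam 0 0 x) := by
  obtain ⟨κ, basic⟩ := hlamEq.exists_lam_eq_mul_delta hmsym hlam hblock h02 hdet
  have ν_eq (x : Fin 3 → ℝ) (a b : Fin 2) :
      nuDP m lam a b x = κ * (m a.castSucc b.castSucc * Real.cos (x a.castSucc - x b.castSucc)) :=
    nuDP_of_eq_mul_delta (basic x) a b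
  have h00 : m 0 0 ≠ 0 := hblock 0 0
  refine ⟨κ, basic, fun x => ?_, fun x => ?_, fun x => ?_⟩
  · simp [ν_eq]
  · simp [ν_eq, mul_left_comm, h00]
  · rw [← neg_sub, Real.cos_neg]
    simp only [ν_eq, Fin.castSucc_zero, Fin.castSucc_one, sub_self, Real.cos_zero, mul_one]
    field_simp

/-- For the double pendulum on a wheel (two unactuated degrees of freedom),
every smooth solution of the λ-equations is basic: `λ_a^i = κ δ_a^i`;
equivalently `ν₁₁ ≡ κ m₁₁`, `ν₂₂ ≡ (m₂₂/m₁₁) ν₁₁` and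
`ν₁₂ = (m₁₂/m₁₁) cos(x² − x¹) ν₁₁`. -/
theorem double_pendulum_only_basic_solutions
    (m : Matrix (Fin 3) (Fin 3) ℝ) (hmsym : m.IsSymm) (hmpos : ∀ i j, 0 < m i j)
    (hginv : ∀ x : Fin 3 → ℝ, IsUnit (gDP m x).det)
    (lam : (Fin 3 → ℝ) → Fin 2 → Fin 3 → ℝ)
    (hlam : ∀ a i, ContDiff ℝ (⊤ : ℕ∞) (fun x => lam x a i))
    (hlamEq : ∀ (x : Fin 3 → ℝ) (k : Fin 3) (a b : Fin 2),
      pd k (fun y => ∑ i, gDP m y (Fin.castSucc a) i * lam y b i) x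
        - ∑ i, chr (gDP m) k (Fin.castSucc a) i x * lam x b i
        - ∑ i, chr (gDP m) k (Fin.castSucc b) i x * lam x a i = 0) :
    ∃ κ : ℝ,
      (∀ (x : Fin 3 → ℝ) (a : Fin 2) (i : Fin 3),
        lam x a i = κ * if (Fin.castSucc a : Fin 3) = i then 1 else 0) ∧
      (∀ x : Fin 3 → ℝ, nuDP m lam 0 0 x = κ * m 0 0) ∧
      (∀ x : Fin 3 → ℝ, nuDP m lam 1 1 x = (m 1 1 / m 0 0) * nuDP m lam 0 0 x) ∧
      (∀ x : Fin 3 → ℝ, nuDP m lam 0 1 x =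
        (m 0 1 / m 0 0) * Real.cos (x 1 - x 0) * nuDP m lam 0 0 x) := by
  have hdet := right_ne_zero_of_mul (det_gDP_zero_zero_pi_div_two m ▸ (hginv _).ne_zero)
  exact double_pendulum_only_basic_solutions_general m hmsym (fun _ _ => (hmpos _ _).ne')
    (hmpos 0 2).ne' hdet lam (fun a i => (hlam a i).differentiable (by simp)) hlamEq
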